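/- Let (g,ω) be a quadratic finite-dimensional Lie algebra over a field F of characteristic different from 2, where g is perfect and has trivial center Z(g) = 0, let R : g → g be a linear map skew-adjoint with respect to ω, and define θ(x,y) = [R(x),R(y)] − R([R(x),y] + [x,R(y)]). Then the bracket [x,y]_R = [R(x),y] + [x,R(y)] satisfies the Jacobi identity (equivalently, by the paper's Propositions 2, 3 and 5, the pair (g,δ_r) associated to R is a Lie bialgebra) if and only if there exists a centrum map ν ∈ Cent(g) such that θ(x,y) = ν([x,y]) for all x,y ∈ g. -/

import Mathlib

open TensorProduct

/-- A four-argument function with the symmetries of a curvature tensor (antisymmetric in the first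
pair and in the last pair, with the Bianchi identity) is symmetric under exchange of the pairs. -/
theorem pair_symm_of_bianchi {F L : Type*} [Field F] (h2 : (2 : F) ≠ 0) (A : L → L → L → L → F)
    (h₁ : ∀ x y z w, A x y z w = -A y x z w) (h₃ : ∀ x y z w, A x y z w = -A x y w z)
    (hB : ∀ x y z w, A x y z w + A y z x w + A z x y w = 0) (x y z w : L) :
    A x y z w = A z w x y := by
  apply mul_left_cancel₀ h2
  linear_combination hB x y z w + hB y z w x - hB z w x y - hB w x y z
    - h₃ y z x w - h₃ z w y x + h₃ w x z y + h₃ x y z w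
    - h₁ z x y w + h₃ x z w y - h₁ w y z x + h₃ y w x z

theorem lie_lie_cyclic {L : Type*} [LieRing L] (x y z : L) :
    ⁅⁅x, y⁆, z⁆ + ⁅⁅y, z⁆, x⁆ + ⁅⁅z, x⁆, y⁆ = 0 := by
  have h := lie_jacobi z x y
  rw [← lie_skew ⁅x, y⁆ z, ← lie_skew ⁅y, z⁆ x, ← lie_skew ⁅z, x⁆ y]
  rw [← neg_add, ← neg_add, neg_eq_zero, ← h]

namespace LinearMap

variable {F L : Type*} [Field F] [LieRing L] [LieAlgebra F L]

/-- The bilinear map `(x, y) ↦ [R x, R y] - R ([R x, y] + [x, R y])`. -/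
def lieDefect (R : L →ₗ[F] L) : L →ₗ[F] L →ₗ[F] L :=
  LinearMap.mk₂ F (fun x y => ⁅R x, R y⁆ - R (⁅R x, y⁆ + ⁅x, R y⁆))
    (fun x x' y => by simp only [map_add, add_lie]; abel)
    (fun c x y => by simp only [map_add, map_smul, smul_lie]; module)
    (fun x y y' => by simp only [map_add, lie_add]; abel)
    (fun c x y => by simp only [map_add, map_smul, lie_smul]; module)

theorem lieDefect_apply (R : L →ₗ[F] L) (x y : L) :
    R.lieDefect x y = ⁅R x, R y⁆ - R (⁅R x, y⁆ + ⁅x, R y⁆) := rfl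

theorem lieDefect_swap (R : L →ₗ[F] L) (x y : L) : R.lieDefect x y = -R.lieDefect y x := by
  rw [lieDefect_apply, lieDefect_apply, ← lie_skew (R y), ← lie_skew (R y) x, ← lie_skew y (R x)]
  simp only [map_add, map_neg]
  abel

/-- The Jacobiator of `[R x, y] + [x, R y]` is minus the cyclic sum of `[R.lieDefect x y, z]`. -/
theorem jacobiator_eq_neg_lieDefect (R : L →ₗ[F] L) (b : L → L → L)
    (hb : ∀ x y, b x y = ⁅R x, y⁆ + ⁅x, R y⁆) (x y z : L) :
    b (b x y) z + b (b y z) x + b (b z x) y =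
      -(⁅R.lieDefect x y, z⁆ + ⁅R.lieDefect y z, x⁆ + ⁅R.lieDefect z x, y⁆) := by
  simp only [hb, lieDefect_apply, add_lie, sub_lie, map_add]
  linear_combination (norm := abel) lie_lie_cyclic (R x) (R y) z + lie_lie_cyclic (R x) y (R z)
    + lie_lie_cyclic x (R y) (R z)

/-- If `R` is skew-adjoint, the trilinear form `ω (R.lieDefect x y) z` is cyclic. -/
theorem lieDefect_form_cyclic (ω : L →ₗ[F] L →ₗ[F] F) (hsymm : ∀ x y : L, ω x y = ω y x)
    (hinv : ∀ a b c : L, ω ⁅a, b⁆ c = ω a ⁅b, c⁆) (R : L →ₗ[F] L)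
    (hR : ∀ x y : L, ω (R x) y = -ω x (R y)) (x y z : L) :
    ω (R.lieDefect x y) z = ω (R.lieDefect y z) x := by
  have cyc : ∀ a b c : L, ω ⁅a, b⁆ c = ω ⁅b, c⁆ a := fun a b c => by rw [hinv, hsymm]
  simp only [lieDefect_apply, map_sub, map_add, LinearMap.sub_apply, LinearMap.add_apply, hR]
  linear_combination cyc (R x) (R y) z + cyc (R x) y (R z) + cyc x (R y) (R z)

/-- Over a perfect Lie algebra, a bilinear map factors through the bracket as soon as it vanishes
on the kernel of the bracket. -/
theorem exists_comp_lie_eq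
    (hperf : Submodule.span F {w : L | ∃ x y : L, w = ⁅x, y⁆} = ⊤) (θ : L →ₗ[F] L →ₗ[F] L)
    (hker : ∀ t : L ⊗[F] L,
      TensorProduct.lift (LieModule.toEnd F L L : L →ₗ[F] L →ₗ[F] L) t = 0 →
        TensorProduct.lift θ t = 0) :
    ∃ ν : L →ₗ[F] L, ∀ x y : L, θ x y = ν ⁅x, y⁆ := by
  set β := TensorProduct.lift (LieModule.toEnd F L L : L →ₗ[F] L →ₗ[F] L)
  have hβ : ∀ x y : L, β (x ⊗ₜ y) = ⁅x, y⁆ := fun x y => by simp [β]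
  have hrange : LinearMap.range β = ⊤ := by
    rw [eq_top_iff, ← hperf, Submodule.span_le]
    rintro _ ⟨x, y, rfl⟩
    exact ⟨x ⊗ₜ y, hβ x y⟩
  obtain ⟨s, hs⟩ := β.exists_rightInverse_of_surjective hrange
  refine ⟨TensorProduct.lift θ ∘ₗ s, fun x y => ?_⟩
  have h := hker (x ⊗ₜ y - s ⁅x, y⁆) (by
    rw [map_sub, hβ, sub_eq_zero]
    exact (LinearMap.congr_fun hs _).symm)
  rw [map_sub, sub_eq_zero, TensorProduct.lift.tmul] at h
  exact h

/-- Over a perfect quadratic Lie algebra in characteristic not two, an antisymmetric bilinear map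
`θ` for which `ω (θ x y) z` is cyclic and the cyclic sum of `[θ x y, z]` vanishes is of the form
`ν [x, y]` for a map `ν` in the centroid. -/
theorem exists_centroid_of_cyclic (h2 : (2 : F) ≠ 0)
    (hperf : Submodule.span F {w : L | ∃ x y : L, w = ⁅x, y⁆} = ⊤)
    (ω : L →ₗ[F] L →ₗ[F] F) (hnondeg : ∀ x : L, (∀ y : L, ω x y = 0) → x = 0)
    (hinv : ∀ a b c : L, ω ⁅a, b⁆ c = ω a ⁅b, c⁆) (θ : L →ₗ[F] L →ₗ[F] L)
    (hθ : ∀ x y, θ x y = -θ y x) (hcyc : ∀ x y z, ω (θ x y) z = ω (θ y z) x)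
    (hjac : ∀ x y z, ⁅θ x y, z⁆ + ⁅θ y z, x⁆ + ⁅θ z x, y⁆ = 0) :
    ∃ ν : L →ₗ[F] L,
      (∀ x y : L, ν ⁅x, y⁆ = ⁅ν x, y⁆ ∧ ν ⁅x, y⁆ = ⁅x, ν y⁆) ∧ ∀ x y : L, θ x y = ν ⁅x, y⁆ := by
  have hpair : ∀ x y z w, ω (θ x y) ⁅z, w⁆ = ω (θ z w) ⁅x, y⁆ := by
    refine pair_symm_of_bianchi h2 (fun x y z w => ω (θ x y) ⁅z, w⁆) ?_ ?_ ?_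
    · intro x y z w
      simp only [hθ x y, map_neg, LinearMap.neg_apply]
    · intro x y z w
      simp only [← lie_skew z w, map_neg]
    · intro x y z w
      simp only [← hinv, ← LinearMap.add_apply, ← map_add, hjac, map_zero, LinearMap.zero_apply]
  obtain ⟨ν, hν⟩ := exists_comp_lie_eq hperf θ (fun t ht => by
    have hform : ∀ z w, ω (TensorProduct.lift θ t) ⁅z, w⁆ =
        ω (θ z w) (TensorProduct.lift (LieModule.toEnd F L L : L →ₗ[F] L →ₗ[F] L) t) := by
      intro z w
      clear ht
      induction t with
      | zero => simp
      | tmul x y => simpa using hpair x y z w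
      | add t t' h h' => simp only [map_add, LinearMap.add_apply, h, h']
    refine hnondeg _ fun u => ?_
    have hu : u ∈ Submodule.span F {w : L | ∃ x y : L, w = ⁅x, y⁆} := hperf ▸ Submodule.mem_top
    have hle : Submodule.span F {w : L | ∃ x y : L, w = ⁅x, y⁆} ≤
        LinearMap.ker (ω (TensorProduct.lift θ t)) := by
      rw [Submodule.span_le]
      rintro _ ⟨z, w, rfl⟩
      rw [SetLike.mem_coe, LinearMap.mem_ker, hform, ht, map_zero]
    exact hle hu)
  have hleft : ∀ x y : L, ν ⁅x, y⁆ = ⁅ν x, y⁆ := by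
    intro u z
    have hu : u ∈ Submodule.span F {w : L | ∃ x y : L, w = ⁅x, y⁆} := hperf ▸ Submodule.mem_top
    induction hu using Submodule.span_induction with
    | mem u hu =>
      obtain ⟨x, y, rfl⟩ := hu
      rw [← hν, ← hν, ← sub_eq_zero]
      refine hnondeg _ fun w => ?_
      rw [map_sub, LinearMap.sub_apply, hcyc, hinv, hpair x y, sub_self]
    | zero => simp
    | add u v _ _ hu hv => simp only [add_lie, map_add, hu, hv]
    | smul c u _ hu => simp only [smul_lie, map_smul, hu]
  refine ⟨ν, fun x y => ⟨hleft x y, ?_⟩, hν⟩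
  rw [← lie_skew, map_neg, hleft, lie_skew]

end LinearMap

/-- Theorem 2: let `(g,ω)` be a quadratic finite-dimensional Lie
algebra over a field of characteristic ≠ 2, with `g` perfect and with trivial
center, and let `R` be skew-adjoint with respect to `ω`. With
`θ(x,y) = [R x, R y] − R([R x, y] + [x, R y])` and `[x,y]_R = [R x, y] + [x, R y]`,
the bracket `[·,·]_R` satisfies the Jacobi identity iff there exists a centrum map
`ν ∈ Cent(g)` with `θ(x,y) = ν([x,y])` for all `x,y`. -/
theorem statement16 {F L : Type*} [Field F] [LieRing L] [LieAlgebra F L]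
    [FiniteDimensional F L]
    (h2 : (2 : F) ≠ 0)
    (hperf : Submodule.span F {w : L | ∃ x y : L, w = ⁅x, y⁆} = ⊤)
    (hZ : ∀ x : L, (∀ y : L, ⁅x, y⁆ = 0) → x = 0)
    (ω : L →ₗ[F] L →ₗ[F] F)
    (hsymm : ∀ x y : L, ω x y = ω y x)
    (hnondeg : ∀ x : L, (∀ y : L, ω x y = 0) → x = 0)
    (hinv : ∀ a b c : L, ω ⁅a, b⁆ c = ω a ⁅b, c⁆)
    (R : L →ₗ[F] L)
    (hskewadj : ∀ x y : L, ω (R x) y = -ω x (R y)) :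
    let bR : L → L → L := fun x y => ⁅R x, y⁆ + ⁅x, R y⁆
    let θ : L → L → L := fun x y => ⁅R x, R y⁆ - R (⁅R x, y⁆ + ⁅x, R y⁆)
    (∀ x y z : L, bR (bR x y) z + bR (bR y z) x + bR (bR z x) y = 0) ↔
    (∃ ν : L →ₗ[F] L,
      (∀ x y : L, ν ⁅x, y⁆ = ⁅ν x, y⁆ ∧ ν ⁅x, y⁆ = ⁅x, ν y⁆) ∧
      (∀ x y : L, θ x y = ν ⁅x, y⁆)) := by
  intro bR θ
  have hjac := R.jacobiator_eq_neg_lieDefect bR fun _ _ => rfl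
  constructor
  · intro h
    exact LinearMap.exists_centroid_of_cyclic h2 hperf ω hnondeg hinv R.lieDefect R.lieDefect_swap
      (LinearMap.lieDefect_form_cyclic ω hsymm hinv R hskewadj)
      fun x y z => by rw [← neg_eq_zero, ← hjac, h]
  · rintro ⟨ν, hν, hθ⟩ x y z
    have hdef : ∀ x y, R.lieDefect x y = ν ⁅x, y⁆ := hθ
    simp only [hjac, hdef, ← (hν _ _).1, ← map_add, lie_lie_cyclic, map_zero, neg_zero]
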